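/- Let k ≥ 3 be an integer, let 0 < ε ≤ 1/125 be real such that q = 1/(25ε) is an integer, and let h ≥ 1 be an integer. Let S' ⊆ {0,1,…,q−1} be a set containing no arithmetic progression of length k, and let S'' ⊆ {⌈2q/5⌉,…,⌊3q/5⌋} be a set containing no arithmetic progression of length k. Define A = { s_0 + s_1·q + … + s_{h−1}·q^{h−1} : s_{h−1} ∈ S' and s_i ∈ S'' for 0 ≤ i ≤ h−2 }. Then A contains no AP_k(ε). -/

import Mathlib

/-- `x 0, …, x (k-1)` is an `ε`-approximate arithmetic progression of length `k`. -/
def IsAPeps (ε : ℝ) (k : ℕ) (x : ℕ → ℤ) : Prop :=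
  ∃ a d : ℝ, 0 < d ∧ ∀ i < k, |(x i : ℝ) - (a + (i : ℝ) * d)| < ε * d

/-- `S` contains no arithmetic progression of length `k` (with nonzero common difference). -/
def APkFree (k : ℕ) (S : Set ℤ) : Prop :=
  ¬ ∃ a d : ℤ, d ≠ 0 ∧ ∀ i < k, a + (i : ℤ) * d ∈ S

/-!
In an approximate progression the second differences are small compared with the total spread.
The spread of the sequence is at most about `q ^ (n + 1)`, where `q ^ n` is the weight of the
leading digit, so for `ε * q ≤ 1 / 4` every second difference is less than `q ^ n / 2`. The lower
digits vary so little that they also contribute less than `q ^ n / 2` to a second difference, so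
the leading digits have integer second differences of absolute value less than `1`, that is, `0`:
they form a genuine arithmetic progression inside a progression-free set, which must be constant.
Deleting the constant leading digit translates the sequence, so the argument repeats with the next
digit, until the sequence is seen to be constant, which is absurd.
-/

theorem eq_add_nsmul_of_second_difference_eq {G : Type*} [AddCommGroup G] {k : ℕ} {t : ℕ → G}
    (ht : ∀ i, i + 2 < k → t (i + 2) - t (i + 1) = t (i + 1) - t i) :
    ∀ i < k, t i = t 0 + i • (t 1 - t 0)
  | 0, _ => by simp
  | 1, _ => by simp
  | i + 2, hi => by
    have h₀ := eq_add_nsmul_of_second_difference_eq ht i (by omega)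
    have h₁ := eq_add_nsmul_of_second_difference_eq ht (i + 1) (by omega)
    rw [← sub_add_cancel (t (i + 2)) (t (i + 1)), ht i hi, h₁, h₀]
    module

theorem APkFree.eq_apply_zero {k : ℕ} {S : Set ℤ} (hS : APkFree k S) {t : ℕ → ℤ}
    (htS : ∀ i < k, t i ∈ S)
    (ht : ∀ i, i + 2 < k → t (i + 2) - t (i + 1) = t (i + 1) - t i) :
    ∀ i < k, t i = t 0 := by
  have hlin : ∀ i < k, t i = t 0 + i * (t 1 - t 0) := by
    simpa only [nsmul_eq_mul] using eq_add_nsmul_of_second_difference_eq ht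
  have hd : t 1 - t 0 = 0 := by
    by_contra hne
    exact hS ⟨t 0, t 1 - t 0, hne, fun i hi => hlin i hi ▸ htS i hi⟩
  intro i hi
  rw [hlin i hi, hd, mul_zero, add_zero]

namespace IsAPeps

variable {ε : ℝ} {k : ℕ} {x y : ℕ → ℤ}

theorem eps_pos (hx : IsAPeps ε k x) (hk : 0 < k) : 0 < ε := by
  obtain ⟨a, d, hd, hx⟩ := hx
  exact pos_of_mul_pos_left ((abs_nonneg _).trans_lt (hx 0 hk)) hd.le

theorem eps_le_of_mul_le (hx : IsAPeps ε k x) (hk : 0 < k) {q : ℤ} (hq : 0 < q) {c : ℝ}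
    (hεq : ε * q ≤ c) : ε ≤ c :=
  (le_mul_of_one_le_right (hx.eps_pos hk).le (by exact_mod_cast hq)).trans hεq

theorem of_eq_add_const (hx : IsAPeps ε k x) (c : ℤ) (hxy : ∀ i < k, x i = y i + c) :
    IsAPeps ε k y := by
  obtain ⟨a, d, hd, hx⟩ := hx
  refine ⟨a - c, d, hd, fun i hi => ?_⟩
  have hi' := hx i hi
  rw [hxy i hi] at hi'
  push_cast at hi'
  convert hi' using 2
  ring

theorem one_sub_mul_abs_second_difference_lt (hx : IsAPeps ε k x) (hε : ε ≤ 1) {i : ℕ}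
    (hi : i + 2 < k) :
    (1 - ε) * |(x (i + 2) - x (i + 1) - (x (i + 1) - x i) : ℝ)| < 2 * ε * (x 2 - x 0) := by
  have hε₀ : 0 < ε := hx.eps_pos (by omega)
  obtain ⟨a, d, -, hx⟩ := hx
  have hspread : 2 * (1 - ε) * d < x 2 - x 0 := by
    have h₀ := (abs_lt.1 (hx 0 (by omega))).2
    have h₂ := (abs_lt.1 (hx 2 (by omega))).1
    push_cast at h₀ h₂
    linarith
  have hdiff : |(x (i + 2) - x (i + 1) - (x (i + 1) - x i) : ℝ)| ≤ 4 * (ε * d) := by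
    obtain ⟨l₀, u₀⟩ := abs_lt.1 (hx i (by omega))
    obtain ⟨l₁, u₁⟩ := abs_lt.1 (hx (i + 1) (by omega))
    obtain ⟨l₂, u₂⟩ := abs_lt.1 (hx (i + 2) hi)
    push_cast at l₁ u₁ l₂ u₂
    rw [abs_le]
    constructor <;> linarith
  calc (1 - ε) * |(x (i + 2) - x (i + 1) - (x (i + 1) - x i) : ℝ)|
      ≤ (1 - ε) * (4 * (ε * d)) := mul_le_mul_of_nonneg_left hdiff (sub_nonneg.2 hε)
    _ = 2 * ε * (2 * (1 - ε) * d) := by ring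
    _ < 2 * ε * (x 2 - x 0) := by gcongr

theorem not_const (hk : 3 ≤ k) (hε : ε ≤ 1) (c : ℤ) : ¬ IsAPeps ε k fun _ => c := fun hc => by
  simpa using hc.one_sub_mul_abs_second_difference_lt hε (i := 0) hk

theorem two_mul_abs_second_difference_lt (hx : IsAPeps ε k x) {q Q : ℤ} (hεq : ε * q ≤ 1 / 4)
    (hq : 0 < q) (hQ : 0 < Q) (hspread : 2 * (x 2 - x 0) ≤ (2 * q - 1) * Q) {i : ℕ}
    (hi : i + 2 < k) : 2 * |x (i + 2) - x (i + 1) - (x (i + 1) - x i)| < Q := by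
  have hε₀ : 0 < ε := hx.eps_pos (by omega)
  have hε : ε ≤ 1 / 4 := hx.eps_le_of_mul_le (by omega) hq hεq
  rify at hspread hQ ⊢
  refine lt_of_mul_lt_mul_left (a := 1 - ε) ?_ (by linarith)
  calc (1 - ε) * (2 * |(x (i + 2) - x (i + 1) - (x (i + 1) - x i) : ℝ)|)
      = 2 * ((1 - ε) * |(x (i + 2) - x (i + 1) - (x (i + 1) - x i) : ℝ)|) := by ring
    _ < 2 * (2 * ε * (x 2 - x 0)) :=
      mul_lt_mul_of_pos_left (hx.one_sub_mul_abs_second_difference_lt (by linarith) hi) two_pos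
    _ = 2 * ε * (2 * (x 2 - x 0)) := by ring
    _ ≤ 2 * ε * ((2 * q - 1) * Q) := by gcongr
    _ = (4 * (ε * q) - 2 * ε) * Q := by ring
    _ ≤ (1 - ε) * Q := by gcongr <;> linarith

theorem leading_second_difference_eq (hx : IsAPeps ε k x) {q Q : ℤ} {t : ℕ → ℤ}
    (hεq : ε * q ≤ 1 / 4) (hxyt : ∀ i, x i = y i + t i * Q)
    (hy : ∀ i < k, ∀ j < k, 4 * |y i - y j| < Q) (ht : ∀ i < k, ∀ j < k, |t i - t j| < q)
    {i : ℕ} (hi : i + 2 < k) : t (i + 2) - t (i + 1) = t (i + 1) - t i := by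
  have hy₂₀ := hy 2 (by omega) 0 (by omega)
  have ht₂₀ := ht 2 (by omega) 0 (by omega)
  have hq : 0 < q := (abs_nonneg _).trans_lt ht₂₀
  have hQ : 0 < Q := (mul_nonneg zero_le_four (abs_nonneg _)).trans_lt hy₂₀
  have hspread : 2 * (x 2 - x 0) ≤ (2 * q - 1) * Q := by
    have ht' : t 2 - t 0 ≤ q - 1 := Int.le_sub_one_of_lt ((le_abs_self _).trans_lt ht₂₀)
    rw [hxyt, hxyt]
    linarith [le_abs_self (y 2 - y 0), mul_le_mul_of_nonneg_right ht' hQ.le]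
  have hΔx : 2 * |x (i + 2) - x (i + 1) - (x (i + 1) - x i)| < Q :=
    hx.two_mul_abs_second_difference_lt hεq hq hQ hspread hi
  have hΔy : 2 * |y (i + 2) - y (i + 1) - (y (i + 1) - y i)| < Q := by
    linarith [abs_sub (y (i + 2) - y (i + 1)) (y (i + 1) - y i),
      hy (i + 2) hi (i + 1) (by omega), hy (i + 1) (by omega) i (by omega)]
  have hΔt : (t (i + 2) - t (i + 1) - (t (i + 1) - t i)) * Q =
      x (i + 2) - x (i + 1) - (x (i + 1) - x i) - (y (i + 2) - y (i + 1) - (y (i + 1) - y i)) := by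
    simp only [hxyt]
    ring
  have hΔt_lt : |(t (i + 2) - t (i + 1) - (t (i + 1) - t i)) * Q| < Q := by
    rw [hΔt]
    exact (abs_sub _ _).trans_lt (by linarith)
  have hzero := Int.eq_zero_of_abs_lt_dvd (dvd_mul_left _ _) hΔt_lt
  exact sub_eq_zero.1 ((mul_eq_zero.1 hzero).resolve_right hQ.ne')

end IsAPeps

theorem abs_sum_mul_pow_lt {q : ℤ} {n : ℕ} {u : ℕ → ℤ} (hu : ∀ j < n, |u j| < q) :
    |∑ j ∈ Finset.range n, u j * q ^ j| < q ^ n := by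
  induction n with
  | zero => simp
  | succ n ih =>
    have hn : |u n| < q := hu n n.lt_succ_self
    have hq : 0 < q := (abs_nonneg _).trans_lt hn
    calc |∑ j ∈ Finset.range (n + 1), u j * q ^ j|
        ≤ |∑ j ∈ Finset.range n, u j * q ^ j| + |u n| * q ^ n := by
          rw [Finset.sum_range_succ]
          exact (abs_add_le _ _).trans_eq (by rw [abs_mul, abs_of_pos (pow_pos hq n)])
      _ < q ^ n + (q - 1) * q ^ n :=
          add_lt_add_of_lt_of_le (ih fun j hj => hu j (hj.trans n.lt_succ_self))
            (mul_le_mul_of_nonneg_right (Int.le_sub_one_of_lt hn) (pow_nonneg hq.le n))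
      _ = q ^ (n + 1) := by ring

theorem four_mul_abs_sum_mul_pow_sub_lt {q : ℤ} {n : ℕ} {s t : ℕ → ℤ}
    (hst : ∀ j < n, 4 * |s j - t j| < q) :
    4 * |∑ j ∈ Finset.range n, s j * q ^ j - ∑ j ∈ Finset.range n, t j * q ^ j| < q ^ n := by
  have h := abs_sum_mul_pow_lt (u := fun j => 4 * (s j - t j)) fun j hj => by
    rw [abs_mul]
    exact hst j hj
  simpa only [mul_assoc, ← Finset.mul_sum, sub_mul, Finset.sum_sub_distrib, abs_mul,
    abs_of_pos (zero_lt_four (α := ℤ))] using h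

theorem IsAPeps.delete_leading_digit {ε : ℝ} {k : ℕ} {q : ℤ} {n : ℕ} {s : ℕ → ℕ → ℤ}
    {S : Set ℤ} (hεq : ε * q ≤ 1 / 4) (hS : APkFree k S) (hsS : ∀ i < k, s i n ∈ S)
    (hlead : ∀ i < k, ∀ l < k, |s i n - s l n| < q)
    (hlower : ∀ j < n, ∀ i < k, ∀ l < k, 4 * |s i j - s l j| < q)
    (hs : IsAPeps ε k fun i => ∑ j ∈ Finset.range (n + 1), s i j * q ^ j) :
    IsAPeps ε k fun i => ∑ j ∈ Finset.range n, s i j * q ^ j := by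
  have hconst : ∀ i < k, s i n = s 0 n := hS.eq_apply_zero hsS fun i hi =>
    hs.leading_second_difference_eq (t := fun i => s i n) hεq
      (fun i => Finset.sum_range_succ _ n)
      (fun i hi l hl => four_mul_abs_sum_mul_pow_sub_lt fun j hj => hlower j hj i hi l hl)
      hlead hi
  refine hs.of_eq_add_const (s 0 n * q ^ n) fun i hi => ?_
  rw [Finset.sum_range_succ, hconst i hi]

theorem not_isAPeps_digit_sum {ε : ℝ} {k : ℕ} (hk : 3 ≤ k) {q : ℤ} (hεq : ε * q ≤ 1 / 4) {n : ℕ}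
    {s : ℕ → ℕ → ℤ} (hfree : ∀ j ≤ n, ∃ S, APkFree k S ∧ ∀ i < k, s i j ∈ S)
    (hlead : ∀ i < k, ∀ l < k, |s i n - s l n| < q)
    (hlower : ∀ j < n, ∀ i < k, ∀ l < k, 4 * |s i j - s l j| < q) :
    ¬ IsAPeps ε k fun i => ∑ j ∈ Finset.range (n + 1), s i j * q ^ j := by
  induction n with
  | zero =>
    intro hs
    obtain ⟨S, hS, hsS⟩ := hfree 0 le_rfl
    have hs' := hs.delete_leading_digit hεq hS hsS hlead hlower
    have hq : 0 < q := (abs_nonneg _).trans_lt (hlead 0 (by omega) 0 (by omega))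
    have hε : ε ≤ 1 / 4 := hs.eps_le_of_mul_le (by omega) hq hεq
    exact IsAPeps.not_const hk (hε.trans (by norm_num)) 0 (by simpa using hs')
  | succ n ih =>
    intro hs
    obtain ⟨S, hS, hsS⟩ := hfree (n + 1) le_rfl
    refine ih (fun j hj => hfree j (by omega)) (fun i hi l hl => ?_)
      (fun j hj => hlower j (by omega)) (hs.delete_leading_digit hεq hS hsS hlead hlower)
    linarith [hlower n n.lt_succ_self i hi l hl, abs_nonneg (s i n - s l n)]

/-- The set `A` of the digit construction in base `q`: integers with `n + 1` digits whose leading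
digit, of index `n`, lies in `S'` and whose digit of index `j < n` lies in `S'' j`. Digits are
arbitrary integers, so these need not be base-`q` expansions in the usual sense. -/
def digitSums (q : ℤ) (n : ℕ) (S' : Set ℤ) (S'' : ℕ → Set ℤ) : Set ℤ :=
  {z | ∃ s : ℕ → ℤ, s n ∈ S' ∧ (∀ j < n, s j ∈ S'' j) ∧
    z = ∑ j ∈ Finset.range (n + 1), s j * q ^ j}

theorem digit_construction_APeps_free_general {k : ℕ} (hk : 3 ≤ k) {ε : ℝ} {q : ℤ}
    (hεq : ε * q ≤ 1 / 4) (n : ℕ) {S' : Set ℤ} {S'' : ℕ → Set ℤ}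
    (hS' : ∀ s ∈ S', ∀ t ∈ S', |s - t| < q) (hS'free : APkFree k S')
    (hS'' : ∀ j < n, ∀ s ∈ S'' j, ∀ t ∈ S'' j, 4 * |s - t| < q)
    (hS''free : ∀ j < n, APkFree k (S'' j)) :
    ¬ ∃ x : ℕ → ℤ, (∀ i < k, x i ∈ digitSums q n S' S'') ∧ IsAPeps ε k x := by
  rintro ⟨x, hx, hap⟩
  choose! s hs' hs'' hxs using hx
  refine not_isAPeps_digit_sum hk hεq (fun j hj => ?_)
    (fun i hi l hl => hS' _ (hs' i hi) _ (hs' l hl))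
    (fun j hj i hi l hl => hS'' j hj _ (hs'' i hi j hj) _ (hs'' l hl j hj))
    (hap.of_eq_add_const 0 (by simpa using hxs))
  obtain rfl | hj := hj.eq_or_lt
  · exact ⟨S', hS'free, hs'⟩
  · exact ⟨S'' j, hS''free j hj, fun i hi => hs'' i hi j hj⟩

theorem four_mul_abs_sub_lt_of_mem_Icc {q : ℕ} (hq : 0 < q) {s t : ℤ}
    (hs : s ∈ Set.Icc ⌈2 * (q : ℝ) / 5⌉ ⌊3 * (q : ℝ) / 5⌋)
    (ht : t ∈ Set.Icc ⌈2 * (q : ℝ) / 5⌉ ⌊3 * (q : ℝ) / 5⌋) : 4 * |s - t| < q := by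
  rw [Set.mem_Icc, Int.ceil_le, Int.le_floor] at hs ht
  have h : |(s - t : ℝ)| ≤ 3 * q / 5 - 2 * q / 5 := abs_sub_le_of_le_of_le hs.1 hs.2 ht.1 ht.2
  rify at hq ⊢
  linarith

theorem digit_construction_APeps_free (k : ℕ) (hk : 3 ≤ k)
    (ε : ℝ) (hε : 0 < ε) (hε' : ε ≤ 1 / 125)
    (q : ℕ) (hq : (q : ℝ) = 1 / (25 * ε))
    (h : ℕ) (hh : 1 ≤ h)
    (S' S'' : Set ℤ)
    (hS'sub : S' ⊆ Set.Icc (0 : ℤ) ((q : ℤ) - 1))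
    (hS'free : APkFree k S')
    (hS''sub : S'' ⊆ Set.Icc ⌈(2 * (q : ℝ)) / 5⌉ ⌊(3 * (q : ℝ)) / 5⌋)
    (hS''free : APkFree k S'') :
    ¬ ∃ x : ℕ → ℤ,
      (∀ i < k, x i ∈ {z : ℤ | ∃ s : ℕ → ℤ, s (h - 1) ∈ S' ∧ (∀ i < h - 1, s i ∈ S'') ∧
        z = ∑ i ∈ Finset.range h, s i * (q : ℤ) ^ i}) ∧
      IsAPeps ε k x := by
  have hq₀ : 0 < q := by
    have : (0 : ℝ) < q := hq ▸ by positivity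
    exact_mod_cast this
  have hεq : ε * (q : ℤ) ≤ 1 / 4 := by
    rw [Int.cast_natCast, hq]
    field_simp
    norm_num
  obtain ⟨n, rfl⟩ := Nat.exists_eq_add_of_le' hh
  exact digit_construction_APeps_free_general hk hεq n
    (fun s hs t ht => (abs_sub_le_of_le_of_le (hS'sub hs).1 (hS'sub hs).2 (hS'sub ht).1
      (hS'sub ht).2).trans_lt (by omega)) hS'free
    (fun _ _ s hs t ht => four_mul_abs_sub_lt_of_mem_Icc hq₀ (hS''sub hs) (hS''sub ht))
    fun _ _ => hS''free
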